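/- arXiv:math/0501394 — 2 statements merged into one kernel-verified Lean document; each statement's English description precedes it below -/
import Mathlib

section
/- Let n ≥ 1 and let c : ℤ/nℤ → ℤ. The quotient of ℤ^n by the subgroup generated by the rows of the circulant matrix of c is finite if and only if ∑_{k=0}^{n−1} c_k ζ^k ≠ 0 for every complex n-th root of unity ζ. -/
open Finset
open scoped Matrix

/-!
The row lattice of a square integer matrix has full rank exactly when its determinant is nonzero.
The circulant matrices over a finite abelian group `G` are diagonalised simultaneously by the
characters of `G`: each `ψ` is a left eigenvector of `circulant c`, with eigenvalue
`∑ g, c g * ψ g`. Characters are linearly independent and, given enough roots of unity, there are as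
many of them as elements of `G`, so the determinant is the product of these eigenvalues. The
characters of `ℤ/nℤ` are the maps `k ↦ ζ ^ k` for the `n`-th roots of unity `ζ`.
-/

section RowLattice

variable {ι : Type*} [Fintype ι]

theorem finite_quotient_closure_range_iff_linearIndependent {M : Type*} [AddCommGroup M]
    [Module.Free ℤ M] [Module.Finite ℤ M] {v : ι → M}
    (hcard : Fintype.card ι = Module.finrank ℤ M) :
    Finite (M ⧸ AddSubgroup.closure (Set.range v)) ↔ LinearIndependent ℤ v := by
  rw [← Submodule.span_int_eq_addSubgroupClosure, linearIndependent_iff_card_eq_finrank_span,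
    Set.finrank, hcard, eq_comm]
  exact Submodule.finiteQuotient_iff _

theorem finite_quotient_closure_range_row_iff_det_ne_zero [DecidableEq ι] (A : Matrix ι ι ℤ) :
    Finite ((ι → ℤ) ⧸ AddSubgroup.closure (Set.range A.row)) ↔ A.det ≠ 0 := by
  rw [finite_quotient_closure_range_iff_linearIndependent
      (Module.finrank_fintype_fun_eq_card ℤ).symm,
    Matrix.linearIndependent_row_iff, Matrix.nonsingular_iff_det_ne_zero]

end RowLattice

theorem linearIndependent_addChar (A R : Type*) [AddMonoid A] [CommRing R] [IsDomain R] :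
    LinearIndependent R ((⇑) : AddChar A R → A → R) :=
  (linearIndependent_monoidHom (Multiplicative A) R).comp AddChar.toMonoidHomEquiv
    AddChar.toMonoidHomEquiv.injective

theorem nonempty_equiv_addChar (G M : Type*) [AddCommGroup G] [Finite G] [CommMonoid M]
    [HasEnoughRootsOfUnity M (AddMonoid.exponent G)] : Nonempty (G ≃ AddChar G M) := by
  have : HasEnoughRootsOfUnity M (Monoid.exponent (Multiplicative G)) := by
    rwa [Monoid.exponent_multiplicative]
  obtain ⟨e⟩ := CommGroup.monoidHom_mulEquiv_of_hasEnoughRootsOfUnity (Multiplicative G) M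
  exact ⟨Multiplicative.ofAdd.trans <| e.symm.toEquiv.trans <|
    MonoidHom.toHomUnitsMulEquiv.symm.toEquiv.trans AddChar.toMonoidHomEquiv.symm⟩

theorem forall_addChar_zmod_iff {M : Type*} [CommMonoid M] {n : ℕ} [NeZero n]
    {p : AddChar (ZMod n) M → Prop} :
    (∀ ψ, p ψ) ↔ ∀ (ζ : M) (hζ : ζ ^ n = 1), p (AddChar.zmodChar n hζ) := by
  refine ⟨fun h _ _ => h _, fun h ψ => ?_⟩
  have hψ : ψ 1 ^ n = 1 := by
    rw [← AddChar.map_nsmul_eq_pow, nsmul_one, ZMod.natCast_self, AddChar.map_zero_eq_one]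
  convert h (ψ 1) hψ
  ext k
  rw [AddChar.zmodChar_apply, ← AddChar.map_nsmul_eq_pow, nsmul_one, ZMod.natCast_zmod_val]

section Circulant

theorem vecMul_circulant_addChar {G R : Type*} [AddGroup G] [Fintype G] [CommSemiring R]
    (ψ : AddChar G R) (c : G → R) :
    ψ ᵥ* Matrix.circulant c = (∑ g, c g * ψ g) • ⇑ψ := by
  ext j
  calc ∑ i, ψ i * c (i - j)
      = ∑ g, ψ (g + j) * c (g + j - j) := (Equiv.sum_comp (Equiv.addRight j) _).symm
    _ = ∑ g, c g * ψ g * ψ j := by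
      simp only [add_sub_cancel_right, AddChar.map_add_eq_mul, mul_comm, mul_left_comm]
    _ = (∑ g, c g * ψ g) * ψ j := (sum_mul ..).symm

variable {G R : Type*} [AddCommGroup G] [Fintype G] [DecidableEq G] [CommRing R] [IsDomain R]
  [HasEnoughRootsOfUnity R (AddMonoid.exponent G)]

theorem det_circulant_eq_prod_addChar [Fintype (AddChar G R)] (c : G → R) :
    (Matrix.circulant c).det = ∏ ψ : AddChar G R, ∑ g, c g * ψ g := by
  obtain ⟨e⟩ := nonempty_equiv_addChar G R
  let X : Matrix G G R := Matrix.of fun g => ⇑(e g)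
  have hX : X.det ≠ 0 := Matrix.nonsingular_iff_det_ne_zero.mp <|
    Matrix.linearIndependent_row_iff.mp <| (linearIndependent_addChar G R).comp e e.injective
  have diagonalization :
      X * Matrix.circulant c = Matrix.diagonal (fun h => ∑ g, c g * e h g) * X := by
    ext h j
    rw [Matrix.diagonal_mul]
    exact congrFun (vecMul_circulant_addChar (e h) c) j
  apply mul_left_cancel₀ hX
  rw [← Matrix.det_mul, diagonalization, Matrix.det_mul, Matrix.det_diagonal, mul_comm,
    Equiv.prod_comp e fun ψ => ∑ g, c g * ψ g]

theorem det_circulant_ne_zero_iff (c : G → R) :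
    (Matrix.circulant c).det ≠ 0 ↔ ∀ ψ : AddChar G R, ∑ g, c g * ψ g ≠ 0 := by
  obtain ⟨e⟩ := nonempty_equiv_addChar G R
  have : Fintype (AddChar G R) := .ofEquiv G e
  simp only [det_circulant_eq_prod_addChar, prod_ne_zero_iff, mem_univ, true_imp_iff]

end Circulant

theorem stmt4_general {G : Type*} (R : Type*) [AddCommGroup G] [Fintype G] [CommRing R]
    [IsDomain R] [CharZero R] [HasEnoughRootsOfUnity R (AddMonoid.exponent G)] (c : G → ℤ) :
    Finite ((G → ℤ) ⧸ AddSubgroup.closure (Set.range fun i : G => Matrix.circulant c i)) ↔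
      ∀ ψ : AddChar G R, ∑ g, (c g : R) * ψ g ≠ 0 := by
  classical
  rw [← det_circulant_ne_zero_iff, ← Matrix.map_circulant c (Int.cast : ℤ → R), ← Int.cast_det,
    Int.cast_ne_zero]
  exact finite_quotient_closure_range_row_iff_det_ne_zero _

/-- For `c : ℤ/nℤ → ℤ`, the quotient of `ℤⁿ` by the subgroup generated by the rows of the
circulant matrix of `c` (the matrix whose `(i,j)` entry is `c (i - j)`, so row `i` is
`j ↦ c (i - j)`) is finite if and only if `∑_{k=0}^{n−1} c_k ζ^k ≠ 0` for every complex
`n`-th root of unity `ζ`. -/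
theorem stmt4 (n : ℕ) [NeZero n] (c : ZMod n → ℤ) :
    Finite ((ZMod n → ℤ) ⧸
        AddSubgroup.closure (Set.range fun i : ZMod n => Matrix.circulant c i)) ↔
      ∀ ζ : ℂ, ζ ^ n = 1 → ∑ k : ZMod n, (c k : ℂ) * ζ ^ (k.val : ℕ) ≠ 0 :=
  (stmt4_general ℂ c).trans forall_addChar_zmod_iff
end

section
/- Let n ≥ 1 and m be integers with gcd(m,n) = 1, and let G ∈ ℤ[X]. Then the quotient rings ℤ[X]/(X^n − 1, G(X)) and ℤ[X]/(X^n − 1, G(X^m)) are isomorphic; in particular they are isomorphic as abelian groups. -/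
open Polynomial

/-!
If `m * k ≡ 1 [MOD n]`, then `X ^ (m * k) ≡ X` modulo `X ^ n - 1`, so the substitutions `X ↦ X ^ m`
and `X ↦ X ^ k` are mutually inverse modulo `X ^ n - 1`. The first carries `(X ^ n - 1, G(X))` into
`(X ^ n - 1, G(X ^ m))`; the second carries the latter into
`(X ^ n - 1, G(X ^ (m * k))) = (X ^ n - 1, G(X))`. They therefore induce mutually inverse
isomorphisms of the quotients.
-/

theorem exists_mul_modEq_one_of_coprime {m n : ℕ} (h : m.Coprime n) :
    ∃ k, m * k ≡ 1 [MOD n] := by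
  obtain ⟨t, ht_zero, ht_one⟩ := Nat.chineseRemainder h 0 1
  obtain ⟨k, rfl⟩ := Nat.modEq_zero_iff_dvd.mp ht_zero
  exact ⟨k, ht_one⟩

section QuotientAlgEquiv

variable {R A B : Type*} [CommSemiring R] [CommRing A] [CommRing B] [Algebra R A] [Algebra R B]
  {I : Ideal A} {J : Ideal B}

theorem quotientMapₐ_comp_quotientMapₐ_eq_id (f : A →ₐ[R] B) (g : B →ₐ[R] A)
    (hf : I ≤ J.comap f) (hg : J ≤ I.comap g) (hgf : ∀ a, g (f a) - a ∈ I) :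
    (Ideal.quotientMapₐ I g hg).comp (Ideal.quotientMapₐ J f hf) = AlgHom.id R (A ⧸ I) :=
  Ideal.Quotient.algHom_ext R (AlgHom.ext fun a => Ideal.Quotient.eq.mpr (hgf a))

/-- The isomorphism `A ⧸ I ≃ₐ[R] B ⧸ J` induced by algebra homomorphisms `f : A → B` and
`g : B → A` that respect the ideals and are mutually inverse modulo them. Unlike in
`Ideal.quotientEquivAlg`, `f` itself need not be bijective. -/
def quotientAlgEquivOfInverseMod (f : A →ₐ[R] B) (g : B →ₐ[R] A)
    (hf : I ≤ J.comap f) (hg : J ≤ I.comap g)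
    (hgf : ∀ a, g (f a) - a ∈ I) (hfg : ∀ b, f (g b) - b ∈ J) :
    (A ⧸ I) ≃ₐ[R] B ⧸ J :=
  AlgEquiv.ofAlgHom (Ideal.quotientMapₐ J f hf) (Ideal.quotientMapₐ I g hg)
    (quotientMapₐ_comp_quotientMapₐ_eq_id g f hg hf hfg)
    (quotientMapₐ_comp_quotientMapₐ_eq_id f g hf hg hgf)

end QuotientAlgEquiv

section Expand

variable {R : Type*} [CommRing R] {n j k : ℕ}

theorem pow_sub_one_dvd_pow_sub_pow_of_modEq (h : j ≡ k [MOD n]) (x : R) :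
    x ^ n - 1 ∣ x ^ j - x ^ k := by
  let π := Ideal.Quotient.mk (Ideal.span {x ^ n - 1})
  have hx : π x ^ n = 1 := by
    rw [← map_pow, ← map_one π, Ideal.Quotient.eq]
    exact Ideal.mem_span_singleton_self _
  rw [← Ideal.mem_span_singleton, ← Ideal.Quotient.eq, map_pow, map_pow]
  exact pow_eq_pow_of_modEq h hx

theorem X_pow_sub_X_pow_dvd_expand_sub_expand (f : R[X]) (j k : ℕ) :
    (X ^ j - X ^ k : R[X]) ∣ expand R j f - expand R k f := by
  simpa only [eval_map, expand_eq_comp_X_pow, comp] using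
    sub_dvd_eval_sub (X ^ j) (X ^ k) (f.map C)

theorem X_pow_sub_one_dvd_expand_sub_self (h : j ≡ 1 [MOD n]) (f : R[X]) :
    (X ^ n - 1 : R[X]) ∣ expand R j f - f := by
  simpa only [expand_one] using (pow_sub_one_dvd_pow_sub_pow_of_modEq h X).trans
    (X_pow_sub_X_pow_dvd_expand_sub_expand f j 1)

theorem span_X_pow_sub_one_expand_of_modEq_one (h : j ≡ 1 [MOD n]) (G : R[X]) :
    Ideal.span {(X : R[X]) ^ n - 1, expand R j G} = Ideal.span {(X : R[X]) ^ n - 1, G} := by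
  obtain ⟨q, hq⟩ := X_pow_sub_one_dvd_expand_sub_self h G
  rw [eq_add_of_sub_eq' hq, mul_comm, Ideal.span_pair_add_mul_left]

theorem span_X_pow_sub_one_le_comap_expand (n m : ℕ) (G : R[X]) :
    Ideal.span {(X : R[X]) ^ n - 1, G} ≤
      (Ideal.span {(X : R[X]) ^ n - 1, expand R m G}).comap (expand R m) := by
  have hdvd : (X ^ n - 1 : R[X]) ∣ expand R m (X ^ n - 1) := by
    rw [map_sub, map_pow, expand_X, map_one, pow_right_comm]
    simpa only [one_pow] using sub_dvd_pow_sub_pow (X ^ n : R[X]) 1 m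
  rw [Ideal.span_le, Set.pair_subset_iff]
  constructor
  · exact Ideal.mem_comap.mpr (Ideal.mem_of_dvd _ hdvd (Ideal.subset_span (Set.mem_insert _ _)))
  · exact Ideal.mem_comap.mpr (Ideal.subset_span (Set.mem_insert_of_mem _ rfl))

end Expand

theorem stmt10_general {R : Type*} [CommRing R] {m n : ℕ} (h : m.Coprime n) (G : R[X]) :
    Nonempty ((R[X] ⧸ Ideal.span {(X : R[X]) ^ n - 1, G}) ≃ₐ[R]
      (R[X] ⧸ Ideal.span {(X : R[X]) ^ n - 1, G.comp ((X : R[X]) ^ m)})) := by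
  obtain ⟨k, hmk⟩ := exists_mul_modEq_one_of_coprime h
  have hkm : k * m ≡ 1 [MOD n] := mul_comm m k ▸ hmk
  have expand_expand_sub_mem {i j : ℕ} (hij : i * j ≡ 1 [MOD n]) (H f : R[X]) :
      expand R i (expand R j f) - f ∈ Ideal.span {(X : R[X]) ^ n - 1, H} := by
    rw [expand_expand]
    exact Ideal.mem_of_dvd _ (X_pow_sub_one_dvd_expand_sub_self hij f)
      (Ideal.subset_span (Set.mem_insert _ _))
  have hback : Ideal.span {(X : R[X]) ^ n - 1, expand R m G} ≤
      (Ideal.span {(X : R[X]) ^ n - 1, G}).comap (expand R k) := by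
    simpa only [expand_expand, span_X_pow_sub_one_expand_of_modEq_one hkm] using
      span_X_pow_sub_one_le_comap_expand n k (expand R m G)
  rw [← expand_eq_comp_X_pow]
  exact ⟨quotientAlgEquivOfInverseMod (expand R m) (expand R k)
    (span_X_pow_sub_one_le_comap_expand n m G) hback
    (expand_expand_sub_mem hkm G) (expand_expand_sub_mem hmk _)⟩

/-- If `gcd(m,n) = 1` (with `n, m ≥ 1`) and `G ∈ ℤ[X]`, then the quotient rings
`ℤ[X]/(X^n − 1, G(X))` and `ℤ[X]/(X^n − 1, G(X^m))` are isomorphic; in particular they are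
isomorphic as abelian groups. -/
theorem stmt10 (n : ℕ) [NeZero n] (m : ℕ) (h : Nat.gcd m n = 1) (G : ℤ[X]) :
    Nonempty ((ℤ[X] ⧸ Ideal.span {(X : ℤ[X]) ^ n - 1, G}) ≃+*
        (ℤ[X] ⧸ Ideal.span {(X : ℤ[X]) ^ n - 1, G.comp ((X : ℤ[X]) ^ m)})) ∧
      Nonempty ((ℤ[X] ⧸ Ideal.span {(X : ℤ[X]) ^ n - 1, G}) ≃+
        (ℤ[X] ⧸ Ideal.span {(X : ℤ[X]) ^ n - 1, G.comp ((X : ℤ[X]) ^ m)})) := by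
  obtain ⟨e⟩ := stmt10_general h G
  exact ⟨⟨e.toRingEquiv⟩, ⟨e.toAddEquiv⟩⟩
end
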